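/- Let B be an integral domain of characteristic 0 graded by an abelian group G. Then: (a) for each nonzero D ∈ HLND(B), there exists a height-1 homogeneous prime ideal p of B such that some homogeneous element t ∈ p satisfies D(t) ≠ 0 and D²(t) = 0, and such that 𝔾(B/p) = 𝔾(ker D); (b) 𝔾̄(B) ⊆ 𝔾(ker D) ⊆ 𝔾(B) for every D ∈ HLND(B); (c) if B is saturated in codimension 1, then 𝔾(ker D) = 𝔾(B) for every D ∈ HLND(B). -/

import Mathlib

noncomputable section

/-- A derivation is locally nilpotent. -/
def IsLND {R : Type*} [CommRing R] (D : Derivation ℤ R R) : Prop :=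
  ∀ b : R, ∃ n : ℕ, 0 < n ∧ (⇑D)^[n] b = 0

/-- Kernel of a derivation, as a subring. -/
def kerDer {R : Type*} [CommRing R] (D : Derivation ℤ R R) : Subring R where
  carrier := {x | D x = 0}
  one_mem' := by simp
  mul_mem' := by
    intro a b ha hb
    simp only [Set.mem_setOf_eq] at *
    rw [Derivation.leibniz, ha, hb]
    simp
  add_mem' := by
    intro a b ha hb
    simp only [Set.mem_setOf_eq] at *
    rw [map_add, ha, hb, add_zero]
  zero_mem' := by simp
  neg_mem' := by
    intro a ha
    simp only [Set.mem_setOf_eq] at *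
    rw [map_neg, ha, neg_zero]

section Graded

variable {G : Type*} [AddCommGroup G] {B : Type*} [CommRing B]

/-- The Veronese subring `B^{(H)} = ⊕_{i ∈ H} B_i` of a `G`-graded ring,
realized as the subring generated by the homogeneous elements whose degree lies in `H`. -/
def verSub (𝒜 : G → AddSubgroup B) (H : AddSubgroup G) : Subring B :=
  Subring.closure (⋃ i ∈ (H : Set G), (𝒜 i : Set B))

/-- 𝔾(B): the subgroup of G generated by the degrees of nonzero homogeneous elements. -/
def Gsub (𝒜 : G → AddSubgroup B) : AddSubgroup G :=
  AddSubgroup.closure { i : G | 𝒜 i ≠ ⊥ }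

/-- `H ∈ 𝕋(B)`: the quotient `𝔾(B)/(H ∩ 𝔾(B))` is torsion. -/
def Tmem (𝒜 : G → AddSubgroup B) (H : AddSubgroup G) : Prop :=
  ∀ g ∈ Gsub 𝒜, ∃ n : ℕ, 0 < n ∧ n • g ∈ H

/-- A homogeneous derivation of `B`. -/
def IsHomogDer (𝒜 : G → AddSubgroup B) (D : Derivation ℤ B B) : Prop :=
  ∃ d : G, ∀ (i : G) (x : B), x ∈ 𝒜 i → D x ∈ 𝒜 (i + d)

/-- A homogeneous derivation of a graded subring `S` of `B`. -/
def IsHomogDerOn (𝒜 : G → AddSubgroup B) (S : Subring B) (D : Derivation ℤ S S) : Prop :=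
  ∃ d : G, ∀ (i : G) (x : S), (x : B) ∈ 𝒜 i → ((D x : S) : B) ∈ 𝒜 (i + d)

/-- 𝕄̄(B,p): the subgroup of G generated by the degrees i with B_i ⊄ p. -/
def Mbar (𝒜 : G → AddSubgroup B) (p : Ideal B) : AddSubgroup G :=
  AddSubgroup.closure { i : G | ¬ (𝒜 i : Set B) ⊆ (p : Set B) }

/-- A prime ideal of height 1. -/
def heightOne {R : Type*} [CommRing R] (p : Ideal R) : Prop :=
  p.IsPrime ∧ (∃ q : Ideal R, q.IsPrime ∧ q < p) ∧
    ∀ q r : Ideal R, q.IsPrime → r.IsPrime → q < r → r < p → False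

open Classical in
/-- 𝔾̄(B). -/
def Gbar (𝒜 : G → AddSubgroup B) : AddSubgroup G :=
  if ∃ p : Ideal B, heightOne p then ⨅ p : {p : Ideal B // heightOne p}, Mbar 𝒜 p.1
  else Gsub 𝒜

end Graded

/-- 𝔾(ker D): the subgroup of G generated by the degrees of the nonzero homogeneous
elements of the kernel of D. -/
def kerGsub {G : Type*} [AddCommGroup G] {B : Type*} [CommRing B]
    (𝒜 : G → AddSubgroup B) (D : Derivation ℤ B B) : AddSubgroup G :=
  AddSubgroup.closure { i : G | ∃ x ∈ 𝒜 i, x ≠ 0 ∧ D x = 0 }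

/-- An ideal is homogeneous if it is generated by homogeneous elements. -/
def IsHomogIdeal {G : Type*} [AddCommGroup G] {B : Type*} [CommRing B]
    (𝒜 : G → AddSubgroup B) (I : Ideal B) : Prop :=
  I = Ideal.span { x : B | x ∈ I ∧ ∃ i, x ∈ 𝒜 i }

/-! Let `t` be a homogeneous local slice of `D ≠ 0`, put `s = D t`, and let `K` be the fraction
field of `ker D`. Inverting the nonzero elements of `ker D` turns `B` into the polynomial ring
`K[t]`, so `p = tK[t] ∩ B` is a prime of height one meeting `ker D` only in `0`. The Dixmier map
`b ↦ ∑ⱼ (-t/s)ʲ Dʲ b / j!` is reduction modulo `p`; multiplied by `n! sⁿ` it takes values in `ker D`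
on the elements killed by `Dⁿ⁺¹`, and it is homogeneous if `D` and `t` are. Hence a homogeneous
`b ∉ p` satisfies `n! sⁿ b ≡ a` modulo `p` for some nonzero homogeneous `a ∈ ker D`, so the degree
of `b` is the difference of two degrees occurring in `ker D`. -/

section Iterate

variable {R B : Type*} [CommSemiring R] [CommRing B] [Algebra R B] (D : Derivation R B B) {t : B}

lemma iterate_mul_of_apply_eq_zero {c : B} (hc : D c = 0) (n : ℕ) (x : B) :
    D^[n] (c * x) = c * D^[n] x := by
  have hcomm : Function.Commute D (c * ·) := fun y => by simp [hc]
  exact hcomm.iterate_left n x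

lemma iterate_succ_mul_of_apply_apply_eq_zero (ht : D (D t) = 0) (n : ℕ) (x : B) :
    D^[n + 1] (t * x) = t * D^[n + 1] x + (n + 1) * D t * D^[n] x := by
  induction n with
  | zero => simp [mul_comm]
  | succ n ih =>
    rw [Function.iterate_succ_apply', ih, Function.iterate_succ_apply' (n := n + 1),
      Function.iterate_succ_apply' (n := n)]
    simp only [map_add, Derivation.leibniz, ht, Derivation.map_natCast, Derivation.map_one_eq_zero,
      smul_eq_mul, Nat.cast_add, Nat.cast_one]
    ring

/-- The image of `b` under the Dixmier map `b ↦ ∑ⱼ (-t / D t)ʲ Dʲ b / j!`, with its denominator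
cleared by the factor `n! (D t)ⁿ`; this is the intended reading when `D (D t) = 0` and
`Dⁿ⁺¹ b = 0`. The recursion works because the Dixmier map is multiplicative, kills `t` and fixes
`D t`. -/
def dixmierNumerator (t : B) : ℕ → B → B
  | 0, b => b
  | n + 1, b => dixmierNumerator t n ((n + 1) * D t * b - t * D b)

lemma apply_dixmierNumerator (ht : D (D t) = 0) {n : ℕ} {b : B} (hb : D^[n + 1] b = 0) :
    D (dixmierNumerator D t n b) = 0 := by
  induction n generalizing b with
  | zero => exact hb
  | succ n ih =>
    have hker : D ((n + 1) * D t) = 0 := by simp [ht]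
    apply ih
    rw [iterate_map_sub, iterate_mul_of_apply_eq_zero D hker,
      iterate_succ_mul_of_apply_apply_eq_zero D ht, ← Function.iterate_succ_apply,
      ← Function.iterate_succ_apply, hb]
    ring

lemma dvd_factorial_mul_pow_mul_sub_dixmierNumerator (t : B) (n : ℕ) (b : B) :
    t ∣ n.factorial * D t ^ n * b - dixmierNumerator D t n b := by
  induction n generalizing b with
  | zero => simp [dixmierNumerator]
  | succ n ih =>
    obtain ⟨e, he⟩ := ih ((n + 1) * D t * b - t * D b)
    refine ⟨e + n.factorial * D t ^ n * D b, ?_⟩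
    rw [dixmierNumerator, Nat.factorial_succ]
    push_cast
    linear_combination he

/-- `t` is a local slice of `D`: it is killed by `D²` but not by `D`. -/
structure IsLocalSlice (D : Derivation R B B) (t : B) : Prop where
  apply_ne_zero : D t ≠ 0
  apply_apply : D (D t) = 0

end Iterate

section SliceIdeal

variable {B : Type*} [CommRing B] {D : Derivation ℤ B B} {t : B}

lemma IsLND.exists_iterate_succ_eq_zero (hD : IsLND D) (b : B) : ∃ n, D^[n + 1] b = 0 := by
  obtain ⟨n, -, hn⟩ := hD b
  exact ⟨n, by rw [Function.iterate_succ_apply', hn, map_zero]⟩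

lemma IsLND.exists_iterate_ne_zero (hD : IsLND D) {b : B} (hb : b ≠ 0) :
    ∃ n, D^[n] b ≠ 0 ∧ D^[n + 1] b = 0 := by
  classical
  have hex := hD.exists_iterate_succ_eq_zero b
  refine ⟨Nat.find hex, ?_, Nat.find_spec hex⟩
  cases h : Nat.find hex with
  | zero => exact hb
  | succ m => exact Nat.find_min hex (h ▸ m.lt_succ_self)

lemma IsLND.exists_isLocalSlice_iterate (hD : IsLND D) {b : B} (hb : D b ≠ 0) :
    ∃ n, IsLocalSlice D (D^[n] b) := by
  obtain ⟨n, hne, hzero⟩ := hD.exists_iterate_ne_zero hb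
  rw [← Function.iterate_succ_apply, Function.iterate_succ_apply'] at hne
  rw [← Function.iterate_succ_apply, Function.iterate_succ_apply',
    Function.iterate_succ_apply'] at hzero
  exact ⟨n, hne, hzero⟩

/-- The contraction to `B` of the ideal generated by `t` in the localization of `B` at the regular
elements of `ker D`. In a domain of characteristic zero with `D` locally nilpotent and `t` a local
slice this is `tK[t] ∩ B`, where `K = Frac (ker D)`. -/
def sliceIdeal (D : Derivation ℤ B B) (t : B) : Ideal B :=
  let S := (kerDer D).toSubmonoid ⊓ nonZeroDivisors B
  ((Ideal.span {t}).map (algebraMap B (Localization S))).comap (algebraMap B (Localization S))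

lemma self_mem_sliceIdeal (D : Derivation ℤ B B) (t : B) : t ∈ sliceIdeal D t :=
  Ideal.le_comap_map (Ideal.mem_span_singleton_self t)

lemma factorial_mul_pow_mul_sub_dixmierNumerator_mem_sliceIdeal (D : Derivation ℤ B B) (t : B)
    (n : ℕ) (b : B) :
    n.factorial * D t ^ n * b - dixmierNumerator D t n b ∈ sliceIdeal D t :=
  Ideal.mem_of_dvd _ (dvd_factorial_mul_pow_mul_sub_dixmierNumerator D t n b)
    (self_mem_sliceIdeal D t)

variable [IsDomain B]

lemma mem_sliceIdeal {b : B} : b ∈ sliceIdeal D t ↔ ∃ c, c ≠ 0 ∧ D c = 0 ∧ t ∣ c * b := by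
  rw [sliceIdeal, Ideal.mem_comap, IsLocalization.algebraMap_mem_map_algebraMap_iff
    ((kerDer D).toSubmonoid ⊓ nonZeroDivisors B)]
  simp only [Submonoid.mem_inf, mem_nonZeroDivisors_iff_ne_zero, Ideal.mem_span_singleton]
  exact ⟨fun ⟨c, ⟨hDc, hc⟩, hdvd⟩ => ⟨c, hc, hDc, hdvd⟩,
    fun ⟨c, hc, hDc, hdvd⟩ => ⟨c, ⟨hDc, hc⟩, hdvd⟩⟩

variable [CharZero B]

namespace IsLocalSlice

lemma iterate_eq_zero_of_iterate_succ_mul_eq_zero (ht : IsLocalSlice D t) (hD : IsLND D) {n : ℕ}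
    {x : B} (h : D^[n + 1] (t * x) = 0) : D^[n] x = 0 := by
  by_contra hx
  obtain ⟨m, hne, hzero⟩ := hD.exists_iterate_ne_zero hx
  rw [← Function.iterate_add_apply] at hne hzero
  have hvanish : D^[m + n + 1] (t * x) = 0 := by
    rw [add_assoc, Function.iterate_add_apply, h, iterate_map_zero]
  rw [iterate_succ_mul_of_apply_apply_eq_zero D ht.apply_apply, add_right_comm, hzero, mul_zero,
    zero_add] at hvanish
  exact mul_ne_zero (mul_ne_zero (Nat.cast_add_one_ne_zero _) ht.apply_ne_zero) hne hvanish

lemma eq_zero_of_mem_sliceIdeal (ht : IsLocalSlice D t) (hD : IsLND D) {a : B} (ha : D a = 0)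
    (hmem : a ∈ sliceIdeal D t) : a = 0 := by
  obtain ⟨c, hc, hDc, e, hce⟩ := mem_sliceIdeal.1 hmem
  have he : e = 0 := ht.iterate_eq_zero_of_iterate_succ_mul_eq_zero hD (n := 0) (by
    simp [← hce, ha, hDc])
  rw [he, mul_zero] at hce
  exact (mul_eq_zero.1 hce).resolve_left hc

lemma mem_sliceIdeal_of_dvd_factorial_mul_pow_mul (ht : IsLocalSlice D t) {n : ℕ} {b : B}
    (hdvd : t ∣ n.factorial * D t ^ n * b) : b ∈ sliceIdeal D t := by
  refine mem_sliceIdeal.2 ⟨n.factorial * D t ^ n, ?_, ?_, hdvd⟩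
  · exact mul_ne_zero (Nat.cast_ne_zero.2 n.factorial_ne_zero) (pow_ne_zero n ht.apply_ne_zero)
  · simp [Derivation.leibniz_pow, ht.apply_apply]

lemma mem_sliceIdeal_iff_dixmierNumerator_eq_zero (ht : IsLocalSlice D t) (hD : IsLND D) {n : ℕ}
    {b : B} (hb : D^[n + 1] b = 0) : b ∈ sliceIdeal D t ↔ dixmierNumerator D t n b = 0 := by
  constructor
  · intro hmem
    refine ht.eq_zero_of_mem_sliceIdeal hD (apply_dixmierNumerator D ht.apply_apply hb) ?_
    exact (Submodule.sub_mem_iff_right _ (Ideal.mul_mem_left _ _ hmem)).1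
      (factorial_mul_pow_mul_sub_dixmierNumerator_mem_sliceIdeal D t n b)
  · intro hzero
    apply ht.mem_sliceIdeal_of_dvd_factorial_mul_pow_mul (n := n)
    simpa only [hzero, sub_zero] using dvd_factorial_mul_pow_mul_sub_dixmierNumerator D t n b

theorem isPrime_sliceIdeal (ht : IsLocalSlice D t) (hD : IsLND D) : (sliceIdeal D t).IsPrime := by
  refine ⟨?_, fun {x y} hxy => ?_⟩
  · rw [Ideal.ne_top_iff_one]
    exact fun h => one_ne_zero (ht.eq_zero_of_mem_sliceIdeal hD D.map_one_eq_zero h)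
  · obtain ⟨m, hm⟩ := hD.exists_iterate_succ_eq_zero x
    obtain ⟨n, hn⟩ := hD.exists_iterate_succ_eq_zero y
    rw [ht.mem_sliceIdeal_iff_dixmierNumerator_eq_zero hD hm,
      ht.mem_sliceIdeal_iff_dixmierNumerator_eq_zero hD hn, ← mul_eq_zero]
    have hker : D (dixmierNumerator D t m x * dixmierNumerator D t n y) = 0 := by
      simp [apply_dixmierNumerator D ht.apply_apply hm,
        apply_dixmierNumerator D ht.apply_apply hn]
    refine ht.eq_zero_of_mem_sliceIdeal hD hker ?_
    have hx := factorial_mul_pow_mul_sub_dixmierNumerator_mem_sliceIdeal D t m x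
    have hy := factorial_mul_pow_mul_sub_dixmierNumerator_mem_sliceIdeal D t n y
    rw [← Ideal.Quotient.eq_zero_iff_mem] at hxy ⊢
    rw [← Ideal.Quotient.eq] at hx hy
    rw [map_mul, ← hx, ← hy, ← map_mul, mul_mul_mul_comm, map_mul, hxy, mul_zero]

theorem eq_bot_of_isPrime_of_lt_sliceIdeal (ht : IsLocalSlice D t) (hD : IsLND D) {r : Ideal B}
    (hr : r.IsPrime) (hlt : r < sliceIdeal D t) : r = ⊥ := by
  have hker : ∀ c, c ≠ 0 → D c = 0 → c ∉ r := fun c hc hDc hmem =>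
    hc (ht.eq_zero_of_mem_sliceIdeal hD hDc (hlt.le hmem))
  have htr : t ∉ r := fun htr => hlt.not_ge fun b hb => by
    obtain ⟨c, hc, hDc, hdvd⟩ := mem_sliceIdeal.1 hb
    exact (hr.mem_or_mem (Ideal.mem_of_dvd r hdvd htr)).resolve_left (hker c hc hDc)
  -- Up to a kernel factor, every element of `r` is `t` times an element of `r` of lower order.
  have hdescent : ∀ n, ∀ x ∈ r, D^[n] x = 0 → x = 0 := by
    intro n
    induction n with
    | zero => exact fun x _ hx => hx
    | succ n ih =>
      intro x hxr hx
      obtain ⟨c, hc, hDc, e, hce⟩ := mem_sliceIdeal.1 (hlt.le hxr)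
      have her : e ∈ r := (hr.mem_or_mem (hce ▸ r.mul_mem_left c hxr)).resolve_left htr
      have he : D^[n] e = 0 := ht.iterate_eq_zero_of_iterate_succ_mul_eq_zero hD (by
        rw [← hce, iterate_mul_of_apply_eq_zero D hDc, hx, mul_zero])
      rw [ih e her he, mul_zero] at hce
      exact (mul_eq_zero.1 hce).resolve_left hc
  refine (Submodule.eq_bot_iff r).2 fun x hx => ?_
  obtain ⟨n, -, hn⟩ := hD x
  exact hdescent n x hx hn

theorem heightOne_sliceIdeal (ht : IsLocalSlice D t) (hD : IsLND D) :
    heightOne (sliceIdeal D t) := by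
  refine ⟨ht.isPrime_sliceIdeal hD, ⟨⊥, Ideal.isPrime_bot, bot_lt_iff_ne_bot.2 fun h => ?_⟩,
    fun q r _ hr hqr hlt => ?_⟩
  · have ht0 : t = 0 := by simpa only [h, Ideal.mem_bot] using self_mem_sliceIdeal D t
    exact ht.apply_ne_zero (by rw [ht0, map_zero])
  · exact not_lt_bot (ht.eq_bot_of_isPrime_of_lt_sliceIdeal hD hr hlt ▸ hqr)

end IsLocalSlice

end SliceIdeal

section Homogeneous

lemma exists_homogeneous_apply_ne_zero {R G B : Type*} [CommSemiring R] [CommRing B] [Algebra R B]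
    [DecidableEq G] (𝒜 : G → AddSubgroup B) [DirectSum.Decomposition 𝒜] {D : Derivation R B B}
    (hD : D ≠ 0) :
    ∃ i, ∃ b ∈ 𝒜 i, D b ≠ 0 := by
  by_contra! hzero
  refine hD (Derivation.ext fun b => ?_)
  induction b using DirectSum.Decomposition.inductionOn 𝒜 with
  | zero => simp
  | homogeneous m => exact hzero _ m m.2
  | add x y hx hy => rw [map_add, map_add, hx, hy]

variable {G B : Type*} [AddCommGroup G] [CommRing B] {𝒜 : G → AddSubgroup B}
  {D : Derivation ℤ B B} {d l : G} {t : B}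

/-- `D` is homogeneous of degree `d`, so that `IsHomogDer 𝒜 D` says `∃ d, HasDegree 𝒜 D d`. -/
def HasDegree (𝒜 : G → AddSubgroup B) (D : Derivation ℤ B B) (d : G) : Prop :=
  ∀ (i : G) (x : B), x ∈ 𝒜 i → D x ∈ 𝒜 (i + d)

lemma HasDegree.iterate_mem (hd : HasDegree 𝒜 D d) (n : ℕ) {i : G} {x : B} (hx : x ∈ 𝒜 i) :
    D^[n] x ∈ 𝒜 (i + n • d) := by
  induction n with
  | zero => simpa using hx
  | succ n ih =>
    rw [Function.iterate_succ_apply', succ_nsmul, ← add_assoc]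
    exact hd _ _ ih

lemma HasDegree.dixmierNumerator_mem [SetLike.GradedMonoid 𝒜] (hd : HasDegree 𝒜 D d)
    (ht : t ∈ 𝒜 l) (n : ℕ) {i : G} {b : B} (hb : b ∈ 𝒜 i) :
    dixmierNumerator D t n b ∈ 𝒜 (i + n • (l + d)) := by
  induction n generalizing i b with
  | zero => simpa [dixmierNumerator] using hb
  | succ n ih =>
    rw [succ_nsmul', ← add_assoc]
    refine ih (sub_mem ?_ ?_)
    · rw [add_comm, mul_assoc, ← Nat.cast_succ, ← nsmul_eq_mul]
      exact nsmul_mem (SetLike.mul_mem_graded (hd l t ht) hb) _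
    · rw [add_left_comm]
      exact SetLike.mul_mem_graded ht (hd i b hb)

variable [DecidableEq G]

lemma IsLND.exists_homogeneous_isLocalSlice [DirectSum.Decomposition 𝒜] (hD : IsLND D)
    (hd : HasDegree 𝒜 D d) (h0 : D ≠ 0) : ∃ l, ∃ t ∈ 𝒜 l, IsLocalSlice D t := by
  obtain ⟨i, b, hb, hDb⟩ := exists_homogeneous_apply_ne_zero 𝒜 h0
  obtain ⟨n, hn⟩ := hD.exists_isLocalSlice_iterate hDb
  exact ⟨_, _, hd.iterate_mem n hb, hn⟩

lemma isHomogIdeal_of_decompose_mem [DirectSum.Decomposition 𝒜] {I : Ideal B}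
    (h : ∀ b ∈ I, ∀ i, (DirectSum.decompose 𝒜 b i : B) ∈ I) : IsHomogIdeal 𝒜 I := by
  classical
  refine le_antisymm (fun b hb => ?_) (Ideal.span_le.2 fun x hx => hx.1)
  rw [← DirectSum.sum_support_decompose 𝒜 b]
  exact Ideal.sum_mem _ fun i _ => Ideal.subset_span ⟨h b hb i, i, SetLike.coe_mem _⟩

variable [GradedRing 𝒜]

lemma dvd_mul_decompose_of_dvd_mul (ht : t ∈ 𝒜 l) {k : G} {b c : B} (hc : c ∈ 𝒜 k)
    (hdvd : t ∣ c * b) (i : G) : t ∣ c * (DirectSum.decompose 𝒜 b i : B) := by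
  obtain ⟨e, he⟩ := hdvd
  refine ⟨DirectSum.decompose 𝒜 e (k + i - l), ?_⟩
  rw [← DirectSum.coe_decompose_mul_add_of_left_mem 𝒜 hc,
    ← DirectSum.coe_decompose_mul_add_of_left_mem 𝒜 ht, he, add_sub_cancel]

variable [IsDomain B] [CharZero B]

theorem IsLocalSlice.isHomogIdeal_sliceIdeal (ht : IsLocalSlice D t) (hD : IsLND D)
    (hd : HasDegree 𝒜 D d) (htl : t ∈ 𝒜 l) : IsHomogIdeal 𝒜 (sliceIdeal D t) := by
  refine isHomogIdeal_of_decompose_mem fun b hb i => ?_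
  obtain ⟨n, hn⟩ := hD.exists_iterate_succ_eq_zero b
  have hdvd := dvd_factorial_mul_pow_mul_sub_dixmierNumerator D t n b
  rw [(ht.mem_sliceIdeal_iff_dixmierNumerator_eq_zero hD hn).1 hb, sub_zero] at hdvd
  have hfactor : (n.factorial : B) * D t ^ n ∈ 𝒜 (n • (l + d)) := by
    rw [← nsmul_eq_mul]
    exact nsmul_mem (SetLike.pow_mem_graded n (hd l t htl)) _
  exact ht.mem_sliceIdeal_of_dvd_factorial_mul_pow_mul
    (dvd_mul_decompose_of_dvd_mul htl hfactor hdvd i)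

theorem IsLocalSlice.Mbar_sliceIdeal (ht : IsLocalSlice D t) (hD : IsLND D)
    (hd : HasDegree 𝒜 D d) (htl : t ∈ 𝒜 l) : Mbar 𝒜 (sliceIdeal D t) = kerGsub 𝒜 D := by
  apply le_antisymm
  · refine (AddSubgroup.closure_le _).2 fun i hi => ?_
    obtain ⟨b, hb, hbp⟩ := Set.not_subset.1 hi
    obtain ⟨n, hn⟩ := hD.exists_iterate_succ_eq_zero b
    have hnum : i + n • (l + d) ∈ kerGsub 𝒜 D := AddSubgroup.subset_closure
      ⟨dixmierNumerator D t n b, hd.dixmierNumerator_mem htl n hb,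
        mt (ht.mem_sliceIdeal_iff_dixmierNumerator_eq_zero hD hn).2 hbp,
        apply_dixmierNumerator D ht.apply_apply hn⟩
    have hslice : l + d ∈ kerGsub 𝒜 D := AddSubgroup.subset_closure
      ⟨D t, hd l t htl, ht.apply_ne_zero, ht.apply_apply⟩
    exact (AddSubgroup.add_mem_cancel_right _ (nsmul_mem hslice n)).1 hnum
  · refine AddSubgroup.closure_mono ?_
    rintro i ⟨x, hx, hx0, hDx⟩ hsub
    exact hx0 (ht.eq_zero_of_mem_sliceIdeal hD hDx (hsub hx))

end Homogeneous

section DegreeGroups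

variable {G B : Type*} [AddCommGroup G] [CommRing B] (𝒜 : G → AddSubgroup B)

lemma kerGsub_le_Gsub (D : Derivation ℤ B B) : kerGsub 𝒜 D ≤ Gsub 𝒜 :=
  AddSubgroup.closure_mono fun _ ⟨_, hx, hx0, _⟩ hbot =>
    hx0 ((AddSubgroup.eq_bot_iff_forall _).1 hbot _ hx)

lemma kerGsub_zero : kerGsub 𝒜 0 = Gsub 𝒜 := by
  refine le_antisymm (kerGsub_le_Gsub 𝒜 0) (AddSubgroup.closure_mono fun i hi => ?_)
  obtain ⟨x, hx, hx0⟩ := (AddSubgroup.bot_or_exists_ne_zero (𝒜 i)).resolve_left hi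
  exact ⟨x, hx, hx0, rfl⟩

lemma Mbar_le_Gsub (p : Ideal B) : Mbar 𝒜 p ≤ Gsub 𝒜 :=
  AddSubgroup.closure_mono fun i hi hbot => hi (by simp [hbot])

variable {𝒜} in
lemma Gbar_le_Mbar {p : Ideal B} (hp : heightOne p) : Gbar 𝒜 ≤ Mbar 𝒜 p := by
  rw [Gbar, if_pos ⟨p, hp⟩]
  exact iInf_le (fun q : {q : Ideal B // heightOne q} => Mbar 𝒜 q.1) ⟨p, hp⟩

lemma Gbar_le_Gsub : Gbar 𝒜 ≤ Gsub 𝒜 := by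
  by_cases h : ∃ p : Ideal B, heightOne p
  · obtain ⟨p, hp⟩ := h
    exact (Gbar_le_Mbar hp).trans (Mbar_le_Gsub 𝒜 p)
  · rw [Gbar, if_neg h]

variable [DecidableEq G] [IsDomain B] [CharZero B] [GradedRing 𝒜] {D : Derivation ℤ B B}

namespace IsLND

theorem exists_heightOne_Mbar_eq_kerGsub (hD : IsLND D) (hhom : IsHomogDer 𝒜 D) (h0 : D ≠ 0) :
    ∃ p : Ideal B, heightOne p ∧ IsHomogIdeal 𝒜 p ∧
      (∃ t ∈ p, (∃ i, t ∈ 𝒜 i) ∧ D t ≠ 0 ∧ D (D t) = 0) ∧ Mbar 𝒜 p = kerGsub 𝒜 D := by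
  obtain ⟨d, hd⟩ := hhom
  obtain ⟨l, t, htl, ht⟩ := hD.exists_homogeneous_isLocalSlice hd h0
  exact ⟨sliceIdeal D t, ht.heightOne_sliceIdeal hD, ht.isHomogIdeal_sliceIdeal hD hd htl,
    ⟨t, self_mem_sliceIdeal D t, ⟨l, htl⟩, ht.apply_ne_zero, ht.apply_apply⟩,
    ht.Mbar_sliceIdeal hD hd htl⟩

theorem Gbar_le_kerGsub (hD : IsLND D) (hhom : IsHomogDer 𝒜 D) : Gbar 𝒜 ≤ kerGsub 𝒜 D := by
  obtain rfl | h0 := eq_or_ne D 0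
  · exact (kerGsub_zero 𝒜).symm ▸ Gbar_le_Gsub 𝒜
  · obtain ⟨p, hp, -, -, hMbar⟩ := hD.exists_heightOne_Mbar_eq_kerGsub 𝒜 hhom h0
    exact hMbar ▸ Gbar_le_Mbar hp

end IsLND

end DegreeGroups

/-- Let B be an integral domain of characteristic 0 graded by an abelian group G. Then:
(a) for each nonzero D ∈ HLND(B), there is a height-1 homogeneous prime ideal p of B
    such that some homogeneous t ∈ p satisfies D t ≠ 0 and D² t = 0, and such that
    𝔾(B/p) = 𝔾(ker D) (note 𝔾(B/p) is the subgroup generated by { i | B_i ⊄ p },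
    i.e. 𝕄̄(B,p));
(b) 𝔾̄(B) ⊆ 𝔾(ker D) ⊆ 𝔾(B) for every D ∈ HLND(B);
(c) if B is saturated in codimension 1 then 𝔾(ker D) = 𝔾(B) for every D ∈ HLND(B). -/
theorem Gbar_le_Gsub_ker
    {G : Type*} [AddCommGroup G] [DecidableEq G]
    {B : Type*} [CommRing B] [IsDomain B] [CharZero B]
    (𝒜 : G → AddSubgroup B) [GradedRing 𝒜] :
    (∀ D : Derivation ℤ B B, IsLND D → IsHomogDer 𝒜 D → D ≠ 0 →
      ∃ p : Ideal B, heightOne p ∧ IsHomogIdeal 𝒜 p ∧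
        (∃ t ∈ p, (∃ i, t ∈ 𝒜 i) ∧ D t ≠ 0 ∧ D (D t) = 0) ∧
        Mbar 𝒜 p = kerGsub 𝒜 D) ∧
    (∀ D : Derivation ℤ B B, IsLND D → IsHomogDer 𝒜 D →
      Gbar 𝒜 ≤ kerGsub 𝒜 D ∧ kerGsub 𝒜 D ≤ Gsub 𝒜) ∧
    (Gbar 𝒜 = Gsub 𝒜 →
      ∀ D : Derivation ℤ B B, IsLND D → IsHomogDer 𝒜 D → kerGsub 𝒜 D = Gsub 𝒜) :=
  ⟨fun _ hD hhom h0 => hD.exists_heightOne_Mbar_eq_kerGsub 𝒜 hhom h0,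
    fun D hD hhom => ⟨hD.Gbar_le_kerGsub 𝒜 hhom, kerGsub_le_Gsub 𝒜 D⟩,
    fun hsat D hD hhom =>
      le_antisymm (kerGsub_le_Gsub 𝒜 D) (hsat ▸ hD.Gbar_le_kerGsub 𝒜 hhom)⟩
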